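/- arXiv:0807.0706 — 2 statements merged into one kernel-verified Lean document; each statement's English description precedes it below -/
import Mathlib

section
/- Let R be a commutative noetherian local ring and let M be a nonzero finitely generated R-module of finite Gorenstein injective dimension. Then Gid_R(M) = depth(R). -/
/-!
Bass formula: if `R` is a commutative noetherian local ring and `M` is a nonzero finitely
generated `R`-module of finite Gorenstein injective dimension, then `Gid_R M = depth R`.
-/

universe u

open CategoryTheory

/-- A witness that `J` is a Gorenstein injective `R`-module: an exact complex `I` of
injective `R`-modules (with differentials `d i : I (i+1) →ₗ[R] I i`) such that
`Hom_R(E, I)` is exact for every injective `R`-module `E`, together with an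
isomorphism `J ≅ ker (I 0 → I (-1))`. -/
structure GorensteinInjectiveWitness (R : Type u) [CommRing R]
    (J : Type u) [AddCommGroup J] [Module R J] : Type (u + 1) where
  I : ℤ → Type u
  [acg : ∀ i, AddCommGroup (I i)]
  [mod : ∀ i, Module R (I i)]
  inj : ∀ i, Module.Injective R (I i)
  d : ∀ i : ℤ, I (i + 1) →ₗ[R] I i
  d_comp_d : ∀ i : ℤ, (d i).comp (d (i + 1)) = 0
  exact : ∀ i : ℤ, LinearMap.ker (d i) = LinearMap.range (d (i + 1))
  hom_exact : ∀ (E : Type u) [AddCommGroup E] [Module R E], Module.Injective R E →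
    ∀ (i : ℤ) (f : E →ₗ[R] I (i + 1)), (d i).comp f = 0 →
      ∃ g : E →ₗ[R] I (i + 1 + 1), (d (i + 1)).comp g = f
  ker_iso : Nonempty (J ≃ₗ[R] LinearMap.ker (d (-1)))

/-- `J` is a Gorenstein injective `R`-module. -/
def IsGorensteinInjective (R : Type u) [CommRing R]
    (J : Type u) [AddCommGroup J] [Module R J] : Prop :=
  Nonempty (GorensteinInjectiveWitness R J)

/-- A witness for an exact sequence `0 → M → J⁰ → J¹ → ⋯ → Jⁿ → 0` with each `Jⁱ`
Gorenstein injective (modules beyond index `n` are trivial, which encodes that the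
sequence stops at `Jⁿ`). -/
structure GidWitness (R : Type u) [CommRing R]
    (M : Type u) [AddCommGroup M] [Module R M] (n : ℕ) : Type (u + 1) where
  J : ℕ → Type u
  [acg : ∀ i, AddCommGroup (J i)]
  [mod : ∀ i, Module R (J i)]
  gi : ∀ i ≤ n, IsGorensteinInjective R (J i)
  triv : ∀ i, n < i → Subsingleton (J i)
  ε : M →ₗ[R] J 0
  ε_inj : Function.Injective ε
  d : ∀ i : ℕ, J i →ₗ[R] J (i + 1)
  exact_zero : LinearMap.ker (d 0) = LinearMap.range ε
  exact : ∀ i : ℕ, LinearMap.ker (d (i + 1)) = LinearMap.range (d i)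

/-- The Gorenstein injective dimension of a module: the least `n` admitting an exact
sequence `0 → M → J⁰ → ⋯ → Jⁿ → 0` of Gorenstein injective modules, as an element
of `ℕ∞` (`⊤` if there is no such `n`). -/
noncomputable def gid (R : Type u) [CommRing R]
    (M : Type u) [AddCommGroup M] [Module R M] : ℕ∞ :=
  sInf {c : ℕ∞ | ∃ n : ℕ, c = n ∧ Nonempty (GidWitness R M n)}

/-- The depth of a noetherian local ring `A`: the supremum (in `ℕ∞`) of lengths of
`A`-regular sequences contained in the maximal ideal. -/
noncomputable def ringDepth (A : Type u) [CommRing A] [IsLocalRing A] : ℕ∞ :=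
  sSup {c : ℕ∞ | ∃ rs : List A, c = rs.length ∧
    (∀ r ∈ rs, r ∈ IsLocalRing.maximalIdeal A) ∧ RingTheory.Sequence.IsRegular A rs}

/-!
A module `M` has Gorenstein injective dimension at most `n` if and only if it is a quotient `H / B`
with `B` Gorenstein injective and `H` of injective dimension at most `n`; `Ext T B i = 0` for all
`i > 0` whenever `T` has finite projective dimension.

Suppose `depth R < n`. By Baer's criterion the injective dimension of `H` drops below `n` once
`Ext (R ⧸ J) H n = 0` for every ideal `J`, and by noetherian induction one may take `J = p` prime
and assume vanishing for all larger ideals. Elements outside `p` are then regular on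
`Ext (R ⧸ p) H n`, and they act surjectively because `n` bounds the injective dimension of `H`.
A maximal sequence `rs` in `p` that is regular after localization at `p` gives an embedding of
`R ⧸ p` into `T = R ⧸ (rs)`, and some `s ∉ p` kills `Ext T N i` for all `N` and `i > rs.length`.
If `p` is the maximal ideal, then `rs` is regular, `rs.length < n`, and `s` kills the quotient
`Ext (R ⧸ p) H n` of `Ext T H n`. Otherwise `s` kills `Ext T B n`, which forces `Ext (R ⧸ p) H n`
to be a quotient of a submodule of `Ext T M n`; it is therefore finitely generated and vanishes by
Nakayama's lemma, applied to an element of the maximal ideal outside `p`.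

Conversely, a regular sequence `rs` gives a module `T` of finite projective dimension with
`Ext T M rs.length ≠ 0`, while `Ext T M i = 0` for `i > n`, so `rs.length ≤ n`.
-/

open CategoryTheory.Limits CategoryTheory.Abelian
open scoped ZeroObject

universe w

section ShortExactSequences

variable {𝒞 : Type*} [Category 𝒞] [Abelian 𝒞]

/-- There is a short exact sequence `0 ⟶ A ⟶ B ⟶ C ⟶ 0`. Only its existence is recorded, because
the maps play no role in dimension shifting. -/
def HasShortExact (A B C : 𝒞) : Prop :=
  ∃ (f : A ⟶ B) (g : B ⟶ C) (w : f ≫ g = 0), (ShortComplex.mk f g w).ShortExact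

namespace HasShortExact

theorem cokernel {A B : 𝒞} (f : A ⟶ B) [Mono f] : HasShortExact A B (cokernel f) :=
  ⟨f, cokernel.π f, cokernel.condition f, { exact := ShortComplex.exact_cokernel f }⟩

theorem zero_left {X Y : 𝒞} (e : X ≅ Y) : HasShortExact 0 X Y :=
  ⟨0, e.hom, zero_comp, ((ShortComplex.Splitting.ofIsZeroOfIsIso (.mk 0 e.hom zero_comp)
    (isZero_zero 𝒞) inferInstance)).shortExact⟩

theorem of_op {A B C : 𝒞}
    (h : HasShortExact (Opposite.op C) (Opposite.op B) (Opposite.op A)) : HasShortExact A B C :=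
  let ⟨_, _, _, hS⟩ := h
  ⟨_, _, _, hS.unop⟩

theorem op {A B C : 𝒞} (h : HasShortExact A B C) :
    HasShortExact (Opposite.op C) (Opposite.op B) (Opposite.op A) :=
  let ⟨_, _, _, hS⟩ := h
  ⟨_, _, _, hS.op⟩

theorem of_isPullback {A B C P C' : 𝒞} {f : A ⟶ B} {g : B ⟶ C} {w : f ≫ g = 0}
    (hS : (ShortComplex.mk f g w).ShortExact) {fst : P ⟶ B} {snd : P ⟶ C'} {h : C' ⟶ C}
    (sq : IsPullback fst snd g h) : HasShortExact A P C' := by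
  have hf : Mono f := hS.mono_f
  have hg : Epi g := hS.epi_g
  have comm : f ≫ g = (0 : A ⟶ C') ≫ h := by rw [w, zero_comp]
  have hι : sq.lift f 0 comm ≫ snd = 0 := sq.lift_snd _ _ _
  refine ⟨sq.lift f 0 comm, snd, hι, ?_⟩
  have : Mono (sq.lift f 0 comm) := mono_of_mono_fac (sq.lift_fst _ _ _)
  have : Epi snd := epi_snd_of_isLimit _ _ sq.isLimit
  refine { exact := ShortComplex.exact_of_f_is_kernel _ (KernelFork.IsLimit.ofι' _ hι ?_) }
  intro W k hk
  have hkg : (k ≫ fst) ≫ g = 0 := by rw [Category.assoc, sq.w, reassoc_of% hk, zero_comp]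
  exact ⟨hS.exact.lift _ hkg, sq.hom_ext
    (by rw [Category.assoc, sq.lift_fst]; exact hS.exact.lift_f _ _) (by simp [hk])⟩

theorem exists_pullback {M J N B H : 𝒞} (h₁ : HasShortExact M J N) (h₂ : HasShortExact B H N) :
    ∃ P, HasShortExact B P J ∧ HasShortExact M P H := by
  obtain ⟨f, g, w, hS⟩ := h₁
  obtain ⟨b, q, v, hT⟩ := h₂
  exact ⟨_, of_isPullback hT (IsPullback.of_hasPullback g q).flip,
    of_isPullback hS (IsPullback.of_hasPullback g q)⟩

theorem exists_preimage {B I P M N : 𝒞} (h₁ : HasShortExact B I P) (h₂ : HasShortExact M P N) :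
    ∃ H, HasShortExact H I N ∧ HasShortExact B H M := by
  obtain ⟨b, q, v, hT⟩ := h₁
  obtain ⟨m, r, w, hS⟩ := h₂
  have : Mono m := hS.mono_f
  have : Epi q := hT.epi_g
  have : Epi r := hS.epi_g
  have sq := IsPullback.of_hasPullback q m
  have hι : pullback.fst q m ≫ q ≫ r = 0 := by rw [reassoc_of% sq.w, w, comp_zero]
  refine ⟨pullback q m, ⟨pullback.fst q m, q ≫ r, hι, ?_⟩, of_isPullback hT sq⟩
  have : Epi (q ≫ r) := epi_comp q r
  refine { exact := ShortComplex.exact_of_f_is_kernel _ (KernelFork.IsLimit.ofι' _ hι ?_) }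
  intro W k hk
  have hkr : (k ≫ q) ≫ r = 0 := by rw [Category.assoc, hk]
  exact ⟨pullback.lift k (hS.exact.lift _ hkr) (hS.exact.lift_f _ hkr).symm,
    pullback.lift_fst _ _ _⟩

theorem exists_quotient {B H M E C : 𝒞} (h₁ : HasShortExact B H M) (h₂ : HasShortExact H E C) :
    ∃ J, HasShortExact B E J ∧ HasShortExact M J C :=
  let ⟨J, hJ, hM⟩ := exists_preimage h₂.op h₁.op
  ⟨J.unop, of_op hJ, of_op hM⟩

theorem hasInjectiveDimensionLT_left {A B C : 𝒞} (h : HasShortExact A B C) {n : ℕ}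
    (hC : HasInjectiveDimensionLT C n) (hB : HasInjectiveDimensionLT B (n + 1)) :
    HasInjectiveDimensionLT A (n + 1) :=
  let ⟨_, _, _, hS⟩ := h
  hS.hasInjectiveDimensionLT_X₁ n hC hB

theorem hasInjectiveDimensionLT_right {A B C : 𝒞} (h : HasShortExact A B C) {n : ℕ}
    (hB : HasInjectiveDimensionLT B n) (hA : HasInjectiveDimensionLT A (n + 1)) :
    HasInjectiveDimensionLT C n :=
  let ⟨_, _, _, hS⟩ := h
  hS.hasInjectiveDimensionLT_X₃ n hB hA

theorem injective {A B C : 𝒞} (h : HasShortExact A B C) [Injective A] [Injective C] :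
    Injective B :=
  let ⟨_, _, _, hS⟩ := h
  injective_iff_hasInjectiveDimensionLT_one.2
    (hS.hasInjectiveDimensionLT_X₂ 1 inferInstance inferInstance)

end HasShortExact

end ShortExactSequences

section Ext

variable {𝒞 : Type*} [Category 𝒞] [Abelian 𝒞] [HasExt.{w} 𝒞]

theorem exists_lift_of_subsingleton_ext_one {A B C X : 𝒞} {f : A ⟶ B} {g : B ⟶ C} {w : f ≫ g = 0}
    (hS : (ShortComplex.mk f g w).ShortExact) (hXA : Subsingleton (Ext X A 1)) (h : X ⟶ C) :
    ∃ l : X ⟶ B, l ≫ g = h := by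
  obtain ⟨e, he⟩ := Ext.covariant_sequence_exact₃ X hS (Ext.mk₀ h) (zero_add 1)
    (Subsingleton.elim _ _)
  obtain ⟨l, rfl⟩ := (Ext.mk₀_bijective X B).2 e
  exact ⟨l, (Ext.mk₀_bijective X C).1 (by rw [← he, Ext.mk₀_comp_mk₀])⟩

theorem exists_lift_comp_of_subsingleton_ext_one {A B C D D' X : 𝒞} {f : A ⟶ B} {g : B ⟶ C}
    {w : f ≫ g = 0} (hS : (ShortComplex.mk f g w).ShortExact) {f' : C ⟶ D} {g' : D ⟶ D'}
    {w' : f' ≫ g' = 0} (hT : (ShortComplex.mk f' g' w').ShortExact)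
    (hXA : Subsingleton (Ext X A 1)) (h : X ⟶ D) (hg' : h ≫ g' = 0) :
    ∃ l : X ⟶ B, l ≫ g ≫ f' = h := by
  have : Mono f' := hT.mono_f
  obtain ⟨l, hl⟩ := exists_lift_of_subsingleton_ext_one hS hXA (hT.exact.lift h hg')
  exact ⟨l, by rw [reassoc_of% hl]; exact hT.exact.lift_f h hg'⟩

theorem subsingleton_ext_one_of_forall_exists_lift {A B C X : 𝒞} {f : A ⟶ B} {g : B ⟶ C}
    {w : f ≫ g = 0} (hS : (ShortComplex.mk f g w).ShortExact) (hXB : Subsingleton (Ext X B 1))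
    (hlift : ∀ h : X ⟶ C, ∃ l : X ⟶ B, l ≫ g = h) : Subsingleton (Ext X A 1) := by
  refine subsingleton_of_forall_eq 0 fun e => ?_
  obtain ⟨x, rfl⟩ := Ext.covariant_sequence_exact₁ X hS e (Subsingleton.elim _ _) (zero_add 1)
  obtain ⟨h, rfl⟩ := (Ext.mk₀_bijective X C).2 x
  obtain ⟨l, rfl⟩ := hlift h
  have hg : (Ext.mk₀ g).comp hS.extClass (zero_add 1) = 0 := hS.comp_extClass
  rw [← Ext.mk₀_comp_mk₀_assoc, hg, Ext.comp_zero]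

theorem subsingleton_ext_of_iso {X Y N : 𝒞} {n : ℕ} (e : X ≅ Y)
    (hY : Subsingleton (Ext Y N n)) : Subsingleton (Ext X N n) := by
  refine subsingleton_of_forall_eq 0 fun x => ?_
  rw [← Ext.mk₀_id_comp x, ← e.hom_inv_id, ← Ext.mk₀_comp_mk₀_assoc,
    Subsingleton.elim ((Ext.mk₀ e.inv).comp x _) 0, Ext.comp_zero]

namespace HasShortExact

variable {A B C : 𝒞} (h : HasShortExact A B C)
include h

theorem flip_of_subsingleton_ext_one (hCA : Subsingleton (Ext C A 1)) : HasShortExact C B A := by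
  obtain ⟨f, g, w, hS⟩ := h
  obtain ⟨σ, hσ⟩ := exists_lift_of_subsingleton_ext_one hS hCA (𝟙 C)
  let s := ShortComplex.Splitting.ofExactOfSection _ hS.exact σ hσ hS.mono_f
  exact ⟨s.s, s.r, s.s_r, ShortComplex.Splitting.shortExact
    { r := g, s := f, f_r := s.s_g, s_g := s.f_r, id := (add_comm _ _).trans s.id }⟩

theorem subsingleton_ext_left {X : 𝒞} {n : ℕ} (hC : Subsingleton (Ext X C n))
    (hB : Subsingleton (Ext X B (n + 1))) : Subsingleton (Ext X A (n + 1)) := by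
  obtain ⟨f, g, w, hS⟩ := h
  refine subsingleton_of_forall_eq 0 fun e => ?_
  obtain ⟨x, rfl⟩ := Ext.covariant_sequence_exact₁ X hS e (Subsingleton.elim _ _) rfl
  rw [Subsingleton.elim x 0, Ext.zero_comp]

theorem subsingleton_ext_middle {X : 𝒞} {n : ℕ} (hA : Subsingleton (Ext X A n))
    (hC : Subsingleton (Ext X C n)) : Subsingleton (Ext X B n) := by
  obtain ⟨f, g, w, hS⟩ := h
  refine subsingleton_of_forall_eq 0 fun e => ?_
  obtain ⟨x, rfl⟩ := Ext.covariant_sequence_exact₂ X hS e (Subsingleton.elim _ _)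
  rw [Subsingleton.elim x 0, Ext.zero_comp]

theorem subsingleton_ext_right {X : 𝒞} {n : ℕ} (hB : Subsingleton (Ext X B n))
    (hA : Subsingleton (Ext X A (n + 1))) : Subsingleton (Ext X C n) := by
  obtain ⟨f, g, w, hS⟩ := h
  refine subsingleton_of_forall_eq 0 fun e => ?_
  obtain ⟨x, rfl⟩ := Ext.covariant_sequence_exact₃ X hS e rfl (Subsingleton.elim _ _)
  rw [Subsingleton.elim x 0, Ext.zero_comp]

theorem subsingleton_ext_middle_of_contravariant {X : 𝒞} {n : ℕ} (hA : Subsingleton (Ext A X n))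
    (hC : Subsingleton (Ext C X n)) : Subsingleton (Ext B X n) := by
  obtain ⟨f, g, w, hS⟩ := h
  refine subsingleton_of_forall_eq 0 fun e => ?_
  obtain ⟨x, rfl⟩ := Ext.contravariant_sequence_exact₂ hS X e (Subsingleton.elim _ _)
  rw [Subsingleton.elim x 0, Ext.comp_zero]

theorem exists_horseshoe {A' I C' J : 𝒞} (hA : HasShortExact A' I A) (hC : HasShortExact C' J C)
    (hJA : Subsingleton (Ext J A 1)) :
    ∃ Z Q, HasShortExact J Q I ∧ HasShortExact Z Q B ∧ HasShortExact A' Z C' := by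
  obtain ⟨P, hC'PB, hAPJ⟩ := h.exists_pullback hC
  obtain ⟨Q, hA'QP, hJQI⟩ := (hAPJ.flip_of_subsingleton_ext_one hJA).exists_pullback hA
  obtain ⟨Z, hZQB, hA'ZC'⟩ := hA'QP.exists_preimage hC'PB
  exact ⟨Z, Q, hJQI, hZQB, hA'ZC'⟩

end HasShortExact

end Ext

section Annihilators

variable {R 𝒞 : Type*} [CommRing R] [Category 𝒞] [Abelian 𝒞] [Linear R 𝒞] [HasExt.{w} 𝒞]

theorem mem_annihilator_ext_of_smul_id_eq_zero {X : 𝒞} {s : R} (hs : s • 𝟙 X = 0) (Y : 𝒞) (n : ℕ) :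
    s ∈ Module.annihilator R (Ext X Y n) := by
  refine Module.mem_annihilator.2 fun e => ?_
  rw [← Ext.mk₀_id_comp e, ← Ext.smul_comp, ← Ext.mk₀_smul, hs, Ext.mk₀_zero, Ext.zero_comp]

theorem HasShortExact.mul_mem_annihilator_ext {A B C N : 𝒞} (h : HasShortExact A B C) {a b : R}
    {n : ℕ} (ha : a ∈ Module.annihilator R (Ext A N n))
    (hb : b ∈ Module.annihilator R (Ext B N (n + 1))) :
    a * b ∈ Module.annihilator R (Ext C N (n + 1)) := by
  obtain ⟨f, g, w, hS⟩ := h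
  refine Module.mem_annihilator.2 fun e => ?_
  obtain ⟨x, hx⟩ := Ext.contravariant_sequence_exact₃ hS N (b • e)
    (by rw [Ext.comp_smul, Module.mem_annihilator.1 hb]) (add_comm 1 n)
  rw [mul_smul, ← hx, ← Ext.comp_smul, Module.mem_annihilator.1 ha, Ext.comp_zero]

section SMul

variable {T Q N : 𝒞} {x : R} {g : T ⟶ Q} {w : (x • 𝟙 T) ≫ g = 0} {n : ℕ}

theorem isSMulRegular_ext_of_shortExact (hS : (ShortComplex.mk (x • 𝟙 T) g w).ShortExact)
    (hQ : Subsingleton (Ext Q N n)) : IsSMulRegular (Ext T N n) x := by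
  refine isSMulRegular_iff_right_eq_zero_of_smul.2 fun e he => ?_
  obtain ⟨z, rfl⟩ := Ext.contravariant_sequence_exact₂ hS N e
    (by rwa [Ext.mk₀_smul, Ext.smul_comp, Ext.mk₀_id_comp])
  rw [Subsingleton.elim z 0, Ext.comp_zero]

theorem surjective_smul_ext_of_shortExact (hS : (ShortComplex.mk (x • 𝟙 T) g w).ShortExact)
    (hQ : Subsingleton (Ext Q N (n + 1))) : Function.Surjective fun e : Ext T N n => x • e := by
  intro e
  obtain ⟨z, hz⟩ := Ext.contravariant_sequence_exact₁ hS N e (add_comm 1 n) (Subsingleton.elim _ _)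
  exact ⟨z, by rwa [Ext.mk₀_smul, Ext.smul_comp, Ext.mk₀_id_comp] at hz⟩

end SMul

end Annihilators

section GorensteinInjective

variable {𝒞 : Type*} [Category 𝒞] [Abelian 𝒞] [HasExt.{w} 𝒞]

/-- Gorenstein injective objects, described coinductively: they form the largest class of objects
that are right `Ext`-orthogonal to all injective objects and that can be covered by an injective
object with kernel in the class. -/
def GorensteinInjective (X : 𝒞) : Prop :=
  ∃ P : ObjectProperty 𝒞, P X ∧ ∀ Y, P Y →
    (∀ E, Injective E → ∀ n : ℕ, Subsingleton (Ext E Y (n + 1))) ∧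
      ∃ Z I, Injective I ∧ HasShortExact Z I Y ∧ P Z

namespace GorensteinInjective

variable {X : 𝒞}

theorem subsingleton_ext (hX : GorensteinInjective X) (E : 𝒞) [Injective E] (n : ℕ) :
    Subsingleton (Ext E X (n + 1)) :=
  let ⟨_, hPX, hP⟩ := hX
  (hP X hPX).1 E inferInstance n

theorem exists_syzygy (hX : GorensteinInjective X) :
    ∃ Z I, Injective I ∧ HasShortExact Z I X ∧ GorensteinInjective Z :=
  let ⟨P, hPX, hP⟩ := hX
  let ⟨Z, I, hI, hZIX, hPZ⟩ := (hP X hPX).2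
  ⟨Z, I, hI, hZIX, P, hPZ, hP⟩

theorem of_injective (X : 𝒞) [Injective X] : GorensteinInjective X := by
  refine ⟨fun Y => Injective Y, inferInstance, fun Y _ => ⟨fun E _ n => ?_, ?_⟩⟩
  · exact subsingleton_of_forall_eq 0 Ext.eq_zero_of_injective
  · exact ⟨0, Y, inferInstance, .zero_left (.refl Y), inferInstance⟩

theorem cosyzygy (hX : GorensteinInjective X) {I Y : 𝒞} [Injective I] (h : HasShortExact X I Y) :
    GorensteinInjective Y := by
  refine ⟨fun Z => GorensteinInjective Z ∨ Z = Y, .inr rfl, ?_⟩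
  rintro Z (hZ | rfl)
  · obtain ⟨Z', J, hJ, hZ'JZ, hZ'⟩ := hZ.exists_syzygy
    exact ⟨fun E _ => hZ.subsingleton_ext E, Z', J, hJ, hZ'JZ, .inl hZ'⟩
  · exact ⟨fun E _ n => h.subsingleton_ext_right
      (subsingleton_of_forall_eq 0 Ext.eq_zero_of_injective) (hX.subsingleton_ext E (n + 1)),
      X, I, inferInstance, h, .inl hX⟩

theorem extension {A C : 𝒞} (h : HasShortExact A X C) (hA : GorensteinInjective A)
    (hC : GorensteinInjective C) : GorensteinInjective X := by
  refine ⟨fun Y => ∃ A C, HasShortExact A Y C ∧ GorensteinInjective A ∧ GorensteinInjective C,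
    ⟨A, C, h, hA, hC⟩, ?_⟩
  rintro Y ⟨A, C, hAYC, hA, hC⟩
  obtain ⟨A', I, hI, hA'IA, hA'⟩ := hA.exists_syzygy
  obtain ⟨C', J, hJ, hC'JC, hC'⟩ := hC.exists_syzygy
  obtain ⟨Z, Q, hJQI, hZQY, hA'ZC'⟩ :=
    hAYC.exists_horseshoe hA'IA hC'JC (hA.subsingleton_ext J 0)
  exact ⟨fun E _ n => hAYC.subsingleton_ext_middle (hA.subsingleton_ext E n)
    (hC.subsingleton_ext E n), Z, Q, hJQI.injective, hZQY, A', C', hA'ZC', hA', hC'⟩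

theorem mem_annihilator_ext {R : Type*} [CommRing R] [Linear R 𝒞] {T : 𝒞} {s : R} {t : ℕ}
    (hs : ∀ (N : 𝒞) (n : ℕ), t < n → s ∈ Module.annihilator R (Ext T N n))
    (hX : GorensteinInjective X) (n : ℕ) : s ∈ Module.annihilator R (Ext T X (n + 1)) := by
  suffices shift : ∀ k X, GorensteinInjective X → ∀ n, t < n + 1 + k →
      s ∈ Module.annihilator R (Ext T X (n + 1)) from shift t X hX n (by omega)
  intro k
  induction k with
  | zero => exact fun X _ n hn => hs X _ hn
  | succ k ih =>
    intro X hX n hn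
    obtain ⟨Z, I, hI, ⟨f, g, w, hS⟩, hZ⟩ := hX.exists_syzygy
    refine Module.mem_annihilator.2 fun e => ?_
    obtain ⟨x, hx⟩ := Ext.covariant_sequence_exact₃ T hS (s • e) rfl
      (by rw [Ext.smul_comp, Module.mem_annihilator.1 (ih Z hZ (n + 1) (by omega))])
    rw [← hx, Ext.eq_zero_of_injective x, Ext.zero_comp]

end GorensteinInjective

/-- `M` has Gorenstein injective dimension at most `n`, in the form of a special precover: `M` is
the quotient of an object of injective dimension at most `n` by a Gorenstein injective one. -/
def HasGorensteinInjectiveDimensionLE (M : 𝒞) (n : ℕ) : Prop :=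
  ∃ B H, GorensteinInjective B ∧ HasInjectiveDimensionLE H n ∧ HasShortExact B H M

namespace HasGorensteinInjectiveDimensionLE

variable {M : 𝒞}

theorem of_le {m n : ℕ} (h : HasGorensteinInjectiveDimensionLE M m) (hmn : m ≤ n) :
    HasGorensteinInjectiveDimensionLE M n :=
  let ⟨B, H, hB, hH, hBHM⟩ := h
  ⟨B, H, hB, hasInjectiveDimensionLT_of_ge H (m + 1) (n + 1) (by omega), hBHM⟩

theorem zero_iff : HasGorensteinInjectiveDimensionLE M 0 ↔ GorensteinInjective M := by
  constructor
  · rintro ⟨B, H, hB, hH, hBHM⟩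
    have : Injective H := injective_iff_hasInjectiveDimensionLT_one.2 hH
    exact hB.cosyzygy hBHM
  · intro hM
    obtain ⟨Z, I, hI, hZIM, hZ⟩ := hM.exists_syzygy
    exact ⟨Z, I, hZ, injective_iff_hasInjectiveDimensionLT_one.1 hI, hZIM⟩

theorem succ_iff [EnoughInjectives 𝒞] {n : ℕ} :
    HasGorensteinInjectiveDimensionLE M (n + 1) ↔
      ∃ J N, HasShortExact M J N ∧ GorensteinInjective J ∧
        HasGorensteinInjectiveDimensionLE N n := by
  constructor
  · rintro ⟨B, H, hB, hH, hBHM⟩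
    have hHEC := HasShortExact.cokernel (Injective.ι H)
    obtain ⟨J, hBEJ, hMJC⟩ := hBHM.exists_quotient hHEC
    have hC := hHEC.hasInjectiveDimensionLT_right
      (hasInjectiveDimensionLT_of_ge _ 1 (n + 1) (by omega)) hH
    exact ⟨J, _, hMJC, hB.cosyzygy hBEJ, 0, _, .of_injective 0, hC, .zero_left (.refl _)⟩
  · rintro ⟨J, N, hMJN, hJ, B, H, hB, hH, hBHN⟩
    obtain ⟨P, hBPJ, hMPH⟩ := hMJN.exists_pullback hBHN
    obtain ⟨Z, I, hI, hZIP, hZ⟩ := (GorensteinInjective.extension hBPJ hB hJ).exists_syzygy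
    obtain ⟨H', hH'IH, hZH'M⟩ := hZIP.exists_preimage hMPH
    exact ⟨Z, H', hZ, hH'IH.hasInjectiveDimensionLT_left hH
      (hasInjectiveDimensionLT_of_ge I 1 _ (by omega)), hZH'M⟩

end HasGorensteinInjectiveDimensionLE

end GorensteinInjective

section Chains

theorem exists_int_chain {α : Type*} {r : α → α → Prop} (hsucc : ∀ a, ∃ b, r a b)
    (hpred : ∀ a, ∃ b, r b a) (a : α) (i₀ : ℤ) :
    ∃ f : ℤ → α, f i₀ = a ∧ ∀ i, r (f i) (f (i + 1)) := by
  choose next hnext using hsucc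
  choose prev hprev using hpred
  let f : ℤ → α
    | Int.ofNat n => next^[n] a
    | Int.negSucc n => prev^[n + 1] a
  have hf : ∀ i, r (f i) (f (i + 1)) := by
    rintro (n | _ | n)
    · change r (next^[n] a) (next^[n + 1] a)
      rw [Function.iterate_succ_apply']
      exact hnext _
    · exact hprev a
    · change r (prev^[n + 1 + 1] a) (prev^[n + 1] a)
      rw [Function.iterate_succ_apply']
      exact hprev _
  refine ⟨fun i => f (i - i₀), congrArg f (sub_self i₀), fun i => ?_⟩
  simpa only [sub_add_eq_add_sub] using hf (i - i₀)

variable {𝒞 : Type*} [Category 𝒞] [Abelian 𝒞] [HasExt.{w} 𝒞]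

namespace GorensteinInjective

theorem of_int_chain {K I : ℤ → 𝒞} (hI : ∀ i, Injective (I i))
    (h : ∀ i, HasShortExact (K (i + 1)) (I i) (K i))
    (hK : ∀ E, Injective E → ∀ i, Subsingleton (Ext E (K i) 1)) (i : ℤ) :
    GorensteinInjective (K i) := by
  have orthogonal : ∀ E, Injective E → ∀ (n : ℕ) i, Subsingleton (Ext E (K i) (n + 1)) := by
    intro E hE n
    induction n with
    | zero => exact hK E hE
    | succ n ih =>
      intro i
      have shift := h (i - 1)
      rw [sub_add_cancel] at shift
      exact shift.subsingleton_ext_left (ih _) (subsingleton_of_forall_eq 0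
        fun e => have := hI (i - 1); e.eq_zero_of_injective)
  refine ⟨fun Y => ∃ i, Y = K i, ⟨i, rfl⟩, ?_⟩
  rintro _ ⟨i, rfl⟩
  exact ⟨fun E hE n => orthogonal E hE n i, K (i + 1), I i, hI i, h i, i + 1, rfl⟩

theorem exists_injective_chain [EnoughInjectives 𝒞] {X : 𝒞} (hX : GorensteinInjective X) (i₀ : ℤ) :
    ∃ K I : ℤ → 𝒞, K i₀ = X ∧ (∀ i, GorensteinInjective (K i)) ∧ (∀ i, Injective (I i)) ∧
      ∀ i, HasShortExact (K (i + 1)) (I i) (K i) := by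
  have hsucc : ∀ Y : {Y : 𝒞 // GorensteinInjective Y}, ∃ Z : {Z : 𝒞 // GorensteinInjective Z},
      ∃ I, Injective I ∧ HasShortExact Z.1 I Y.1 := fun Y =>
    let ⟨Z, I, hI, hZIY, hZ⟩ := Y.2.exists_syzygy
    ⟨⟨Z, hZ⟩, I, hI, hZIY⟩
  have hpred : ∀ Y : {Y : 𝒞 // GorensteinInjective Y}, ∃ Z : {Z : 𝒞 // GorensteinInjective Z},
      ∃ I, Injective I ∧ HasShortExact Y.1 I Z.1 := fun Y =>
    have hYIZ := HasShortExact.cokernel (Injective.ι Y.1)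
    ⟨⟨_, Y.2.cosyzygy hYIZ⟩, _, inferInstance, hYIZ⟩
  obtain ⟨K, hK, hchain⟩ := exists_int_chain hsucc hpred ⟨X, hX⟩ i₀
  choose I hI h using hchain
  exact ⟨fun i => (K i).1, I, congrArg Subtype.val hK, fun i => (K i).2, hI, h⟩

theorem congr {X Y : 𝒞} (e : X ≅ Y) : GorensteinInjective X ↔ GorensteinInjective Y :=
  ⟨fun hX => .extension (.zero_left e.symm) (.of_injective 0) hX,
    fun hY => .extension (.zero_left e) (.of_injective 0) hY⟩

end GorensteinInjective

end Chains

section Modules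

variable {R : Type u} [CommRing R]

theorem hasShortExact_moduleCat_iff {A B C : ModuleCat.{u} R} :
    HasShortExact A B C ↔ ∃ (f : A →ₗ[R] B) (g : B →ₗ[R] C),
      Function.Injective f ∧ Function.Exact f g ∧ Function.Surjective g := by
  constructor
  · rintro ⟨f, g, w, hS⟩
    exact ⟨f.hom, g.hom, (ModuleCat.mono_iff_injective f).1 hS.mono_f,
      (ShortComplex.ShortExact.moduleCat_exact_iff_function_exact _).1 hS.exact,
      (ModuleCat.epi_iff_surjective g).1 hS.epi_g⟩
  · rintro ⟨f, g, hf, hfg, hg⟩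
    exact ⟨ModuleCat.ofHom f, ModuleCat.ofHom g, ModuleCat.hom_ext hfg.linearMap_comp_eq_zero,
      ModuleCat.shortComplex_shortExact _ hfg hf hg⟩

namespace GorensteinInjectiveWitness

attribute [local instance] acg mod

variable {J : Type u} [AddCommGroup J] [Module R J] (w : GorensteinInjectiveWitness R J) (i : ℤ)

/-- The short exact sequence `0 → ker d_{i+1} → I_{i+2} → ker d_i → 0` cut out of the exact
complex `I`. -/
def kerShortComplex : ShortComplex (ModuleCat.{u} R) where
  X₁ := .of R (LinearMap.ker (w.d (i + 1)))
  X₂ := .of R (w.I (i + 1 + 1))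
  X₃ := .of R (LinearMap.ker (w.d i))
  f := ModuleCat.ofHom (Submodule.subtype _)
  g := ModuleCat.ofHom ((w.d (i + 1)).codRestrict _ (LinearMap.congr_fun (w.d_comp_d i)))
  zero := ModuleCat.hom_ext (LinearMap.ext fun x => Subtype.ext x.2)

theorem shortExact_kerShortComplex : (w.kerShortComplex i).ShortExact := by
  refine ModuleCat.shortComplex_shortExact _ ?_ Subtype.val_injective ?_
  · exact fun x => ⟨fun hx => ⟨⟨x, congrArg Subtype.val hx⟩, rfl⟩,
      fun ⟨y, hy⟩ => Subtype.ext (hy ▸ y.2)⟩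
  · rintro ⟨x, hx⟩
    obtain ⟨y, rfl⟩ := w.exact i ▸ hx
    exact ⟨y, rfl⟩

theorem injective_kerShortComplex : Injective (w.kerShortComplex i).X₂ :=
  (Module.injective_iff_injective_object R _).1 (w.inj _)

theorem exists_lift_kerShortComplex {E : ModuleCat.{u} R} (hE : Injective E)
    (h : E ⟶ (w.kerShortComplex i).X₃) : ∃ l, l ≫ (w.kerShortComplex i).g = h := by
  obtain ⟨l, hl⟩ := w.hom_exact E ((Module.injective_iff_injective_object R _).2 hE) i
    ((Submodule.subtype _).comp h.hom) (LinearMap.ext fun x => (h.hom x).2)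
  exact ⟨ModuleCat.ofHom l,
    ModuleCat.hom_ext (LinearMap.ext fun x => Subtype.ext (LinearMap.congr_fun hl x))⟩

theorem gorensteinInjective (w : GorensteinInjectiveWitness R J) :
    GorensteinInjective (ModuleCat.of R J) := by
  obtain ⟨e⟩ := w.ker_iso
  refine (GorensteinInjective.congr e.toModuleIso).2 (.of_int_chain w.injective_kerShortComplex
    (K := fun i => .of R (LinearMap.ker (w.d i)))
    (fun i => ⟨_, _, _, w.shortExact_kerShortComplex i⟩) (fun E hE i => ?_) (-1))
  obtain ⟨i, rfl⟩ : ∃ j, i = j + 1 := ⟨i - 1, by ring⟩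
  have : Injective (ModuleCat.of R (w.I (i + 1 + 1))) := w.injective_kerShortComplex i
  exact subsingleton_ext_one_of_forall_exists_lift (w.shortExact_kerShortComplex i)
    (subsingleton_of_forall_eq 0 Ext.eq_zero_of_injective) (w.exists_lift_kerShortComplex i hE)

end GorensteinInjectiveWitness

theorem GorensteinInjective.isGorensteinInjective {J : Type u} [AddCommGroup J] [Module R J]
    (hJ : GorensteinInjective (ModuleCat.of R J)) : IsGorensteinInjective R J := by
  obtain ⟨K, I, hKJ, hK, hI, h⟩ := hJ.exists_injective_chain (-1 + 1 + 1)
  choose ι π w hS using h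
  have hι i : LinearMap.ker (ι i).hom = ⊥ :=
    LinearMap.ker_eq_bot.2 ((ModuleCat.mono_iff_injective _).1 (hS i).mono_f)
  have hπ i : LinearMap.range (π i).hom = ⊤ :=
    LinearMap.range_eq_top.2 ((ModuleCat.epi_iff_surjective _).1 (hS i).epi_g)
  let d i : I (i + 1) →ₗ[R] I i := (ι i).hom.comp (π (i + 1)).hom
  have ker_d i : LinearMap.ker (d i) = LinearMap.range (ι (i + 1)).hom := by
    rw [LinearMap.ker_comp_of_ker_eq_bot _ (hι i)]
    exact ((ShortComplex.ShortExact.moduleCat_exact_iff_function_exact _).1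
      (hS (i + 1)).exact).linearMap_ker_eq
  have range_d i : LinearMap.range (d i) = LinearMap.range (ι i).hom :=
    LinearMap.range_comp_of_range_eq_top _ (hπ (i + 1))
  have exact_d i : LinearMap.ker (d i) = LinearMap.range (d (i + 1)) :=
    (ker_d i).trans (range_d (i + 1)).symm
  refine ⟨{
    I := fun i => I i
    inj := fun i => (Module.injective_iff_injective_object R _).2 (hI i)
    d := d
    d_comp_d := fun i => LinearMap.range_le_ker_iff.1 (exact_d i).ge
    exact := exact_d
    hom_exact := fun E _ _ hE i φ hφ => ?_
    ker_iso := ?_ }⟩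
  · have : Mono (ι i) := (hS i).mono_f
    have : Injective (ModuleCat.of R E) := (Module.injective_iff_injective_object R E).1 hE
    obtain ⟨l, hl⟩ := exists_lift_comp_of_subsingleton_ext_one (hS (i + 1 + 1)) (hS (i + 1))
      ((hK _).subsingleton_ext (ModuleCat.of R E) 0) (ModuleCat.ofHom φ)
      ((cancel_mono (ι i)).1 ((ModuleCat.hom_ext hφ).trans zero_comp.symm))
    exact ⟨l.hom, ModuleCat.hom_ext_iff.1 hl⟩
  · exact ⟨(eqToIso hKJ.symm).toLinearEquiv ≪≫ₗ
      LinearEquiv.ofInjective _ (LinearMap.ker_eq_bot.1 (hι _)) ≪≫ₗ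
      LinearEquiv.ofEq _ _ (ker_d (-1)).symm⟩

theorem isGorensteinInjective_iff {J : Type u} [AddCommGroup J] [Module R J] :
    IsGorensteinInjective R J ↔ GorensteinInjective (ModuleCat.of R J) :=
  ⟨fun ⟨w⟩ => w.gorensteinInjective, fun hJ => hJ.isGorensteinInjective⟩

end Modules

section GorensteinInjectiveDimension

variable {R : Type u} [CommRing R]

namespace GidWitness

variable {M : Type u} [AddCommGroup M] [Module R M]

attribute [local instance] acg mod

theorem gorensteinInjective (w : GidWitness R M 0) : GorensteinInjective (ModuleCat.of R M) := by
  have hε : Function.Surjective w.ε := by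
    rw [← LinearMap.range_eq_top, ← w.exact_zero, LinearMap.ker_eq_top]
    exact LinearMap.ext fun x => (w.triv 1 Nat.zero_lt_one).elim _ _
  exact (GorensteinInjective.congr (LinearEquiv.ofBijective w.ε ⟨w.ε_inj, hε⟩).toModuleIso).2
    (isGorensteinInjective_iff.1 (w.gi 0 le_rfl))

theorem exists_hasShortExact {n : ℕ} (w : GidWitness R M (n + 1)) :
    ∃ J N : ModuleCat.{u} R, HasShortExact (ModuleCat.of R M) J N ∧ GorensteinInjective J ∧
      Nonempty (GidWitness R N n) := by
  refine ⟨.of R (w.J 0), .of R (w.J 0 ⧸ LinearMap.range w.ε),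
    hasShortExact_moduleCat_iff.2 ⟨w.ε, Submodule.mkQ _, w.ε_inj,
      LinearMap.exact_map_mkQ_range w.ε, Submodule.mkQ_surjective _⟩,
    isGorensteinInjective_iff.1 (w.gi 0 (Nat.zero_le _)), ⟨?_⟩⟩
  exact {
    J := fun i => w.J (i + 1)
    gi := fun i hi => w.gi (i + 1) (Nat.succ_le_succ hi)
    triv := fun i hi => w.triv (i + 1) (Nat.succ_lt_succ hi)
    ε := (LinearMap.range w.ε).liftQ (w.d 0) w.exact_zero.ge
    ε_inj := LinearMap.ker_eq_bot.1 (Submodule.ker_liftQ_eq_bot _ _ _ w.exact_zero.le)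
    d := fun i => w.d (i + 1)
    exact_zero := (w.exact 0).trans (Submodule.range_liftQ _ _ _).symm
    exact := fun i => w.exact (i + 1) }

theorem nonempty_zero_of_gorensteinInjective (hM : GorensteinInjective (ModuleCat.of R M)) :
    Nonempty (GidWitness R M 0) := by
  let J : ℕ → ModuleCat.{u} R
    | 0 => .of R M
    | _ + 1 => .of R PUnit
  have hJ i : Subsingleton (J (i + 1)) := inferInstanceAs (Subsingleton PUnit)
  exact ⟨{
    J := fun i => J i
    gi := fun i hi => Nat.le_zero.1 hi ▸ isGorensteinInjective_iff.2 hM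
    triv := fun
      | i + 1, _ => hJ i
    ε := (LinearMap.id : M →ₗ[R] M)
    ε_inj := Function.injective_id
    d := fun i => 0
    exact_zero := LinearMap.ker_zero.trans LinearMap.range_id.symm
    exact := fun i => have := hJ i; Subsingleton.elim _ _ }⟩

theorem nonempty_succ_of_hasShortExact {J₀ N : ModuleCat.{u} R} {n : ℕ}
    (h : HasShortExact (ModuleCat.of R M) J₀ N) (hJ₀ : GorensteinInjective J₀)
    (w : GidWitness R N n) : Nonempty (GidWitness R M (n + 1)) := by
  obtain ⟨f, g, hf, hfg, hg⟩ := hasShortExact_moduleCat_iff.1 h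
  let J : ℕ → ModuleCat.{u} R
    | 0 => J₀
    | i + 1 => .of R (w.J i)
  let d : ∀ i : ℕ, J i →ₗ[R] J (i + 1)
    | 0 => w.ε.comp g
    | i + 1 => w.d i
  have ker_d_zero : LinearMap.ker (w.ε.comp g) = LinearMap.range f :=
    (LinearMap.ker_comp_of_ker_eq_bot g (LinearMap.ker_eq_bot.2 w.ε_inj)).trans
      hfg.linearMap_ker_eq
  have range_d_zero : LinearMap.range (w.ε.comp g) = LinearMap.range w.ε :=
    LinearMap.range_comp_of_range_eq_top _ (LinearMap.range_eq_top.2 hg)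
  exact ⟨{
    J := fun i => J i
    gi := fun
      | 0, _ => isGorensteinInjective_iff.2 hJ₀
      | i + 1, hi => w.gi i (Nat.le_of_succ_le_succ hi)
    triv := fun
      | i + 1, hi => w.triv i (Nat.lt_of_succ_lt_succ hi)
    ε := f
    ε_inj := hf
    d := d
    exact_zero := ker_d_zero
    exact := fun
      | 0 => w.exact_zero.trans range_d_zero.symm
      | i + 1 => w.exact i }⟩

end GidWitness

theorem nonempty_gidWitness_iff {n : ℕ} {M : Type u} [AddCommGroup M] [Module R M] :
    Nonempty (GidWitness R M n) ↔ HasGorensteinInjectiveDimensionLE (ModuleCat.of R M) n := by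
  induction n generalizing M with
  | zero =>
    rw [HasGorensteinInjectiveDimensionLE.zero_iff]
    exact ⟨fun ⟨w⟩ => w.gorensteinInjective, GidWitness.nonempty_zero_of_gorensteinInjective⟩
  | succ n ih =>
    rw [HasGorensteinInjectiveDimensionLE.succ_iff]
    constructor
    · rintro ⟨w⟩
      obtain ⟨J, N, hMJN, hJ, hN⟩ := w.exists_hasShortExact
      exact ⟨J, N, hMJN, hJ, ih.1 hN⟩
    · rintro ⟨J, N, hMJN, hJ, hN⟩
      obtain ⟨w⟩ := ih.2 hN
      exact GidWitness.nonempty_succ_of_hasShortExact hMJN hJ w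

theorem gid_le_natCast_iff {n : ℕ} {M : Type u} [AddCommGroup M] [Module R M] :
    gid R M ≤ n ↔ HasGorensteinInjectiveDimensionLE (ModuleCat.of R M) n := by
  constructor
  · intro h
    obtain ⟨_, ⟨m, rfl, hm⟩, hmn⟩ :=
      sInf_lt_iff.1 (h.trans_lt (ENat.natCast_lt_natCast.2 n.lt_succ_self))
    exact (nonempty_gidWitness_iff.1 hm).of_le (Nat.lt_succ_iff.1 (ENat.natCast_lt_natCast.1 hmn))
  · exact fun h => sInf_le ⟨n, rfl, nonempty_gidWitness_iff.2 h⟩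

end GorensteinInjectiveDimension

section Ideals

variable {R : Type u} [CommRing R]

theorem injective_of_subsingleton_ext_one_quotient {H : ModuleCat.{u} R}
    (h : ∀ J : Ideal R, Subsingleton (Ext (ModuleCat.of R (R ⧸ J)) H 1)) : Injective H := by
  refine (Module.injective_iff_injective_object R H).1 (Module.Baer.injective fun J g => ?_)
  have hJ := LinearMap.exact_subtype_mkQ J
  have hS : (ShortComplex.mk (ModuleCat.ofHom J.subtype) (ModuleCat.ofHom J.mkQ)
      (ModuleCat.hom_ext hJ.linearMap_comp_eq_zero)).ShortExact :=
    ModuleCat.shortComplex_shortExact _ hJ J.subtype_injective J.mkQ_surjective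
  obtain ⟨e, he⟩ := Ext.contravariant_sequence_exact₁ hS H
    (Ext.mk₀ (ModuleCat.ofHom (Y := H) g)) (add_zero 1) (Subsingleton.elim _ _)
  obtain ⟨l, rfl⟩ := (Ext.mk₀_bijective _ H).2 e
  have hl := (Ext.mk₀_bijective _ H).1 ((Ext.mk₀_comp_mk₀ _ l).symm.trans he)
  exact ⟨l.hom, fun x hx => ConcreteCategory.congr_hom hl (⟨x, hx⟩ : J)⟩

theorem hasInjectiveDimensionLE_of_subsingleton_ext_quotient {H : ModuleCat.{u} R} {n : ℕ}
    (h : ∀ J : Ideal R, Subsingleton (Ext (ModuleCat.of R (R ⧸ J)) H (n + 1))) :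
    HasInjectiveDimensionLE H n := by
  induction n generalizing H with
  | zero =>
    exact injective_iff_hasInjectiveDimensionLT_one.1 (injective_of_subsingleton_ext_one_quotient h)
  | succ n ih =>
    have hS := HasShortExact.cokernel (Injective.ι H)
    exact hS.hasInjectiveDimensionLT_left
      (ih fun J => hS.subsingleton_ext_right
        (subsingleton_of_forall_eq 0 Ext.eq_zero_of_injective) (h J))
      (hasInjectiveDimensionLT_of_ge _ 1 _ (by omega))

theorem hasShortExact_colon (I : Ideal R) (x : R) :
    HasShortExact (ModuleCat.of R (R ⧸ I.colon {x})) (ModuleCat.of R (R ⧸ I))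
      (ModuleCat.of R (R ⧸ (I ⊔ Ideal.span {x}))) := by
  have hcolon : I.colon {x} = Submodule.comap (LinearMap.lsmul R R x) I := by
    ext y; simp [Submodule.mem_colon_singleton, mul_comm]
  refine hasShortExact_moduleCat_iff.2 ⟨(I.colon {x}).mapQ I (LinearMap.lsmul R R x) hcolon.le,
    Submodule.factor le_sup_left, ?_, ?_, Submodule.factor_surjective _⟩
  · rw [← LinearMap.ker_eq_bot, Submodule.ker_mapQ, ← hcolon, Submodule.mkQ_map_self]
  · rw [LinearMap.exact_iff, Submodule.factor, Submodule.ker_mapQ, Submodule.range_mapQ,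
      Submodule.comap_id, Submodule.map_sup, Submodule.mkQ_map_self, bot_sup_eq]
    congr 1
    ext y; simp [Ideal.mem_span_singleton', mul_comm]

theorem isOka_subsingleton_ext_quotient (N : ModuleCat.{u} R) (n : ℕ) :
    Ideal.IsOka fun J : Ideal R => Subsingleton (Ext (ModuleCat.of R (R ⧸ J)) N n) where
  top := by
    have hzero := ModuleCat.isZero_of_subsingleton (ModuleCat.of R (R ⧸ (⊤ : Ideal R)))
    refine subsingleton_of_forall_eq 0 fun e => ?_
    rw [← Ext.mk₀_id_comp e, hzero.eq_of_src (𝟙 _) 0, Ext.mk₀_zero, Ext.zero_comp]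
  oka {I x} hsup hcolon :=
    (hasShortExact_colon I x).subsingleton_ext_middle_of_contravariant
      (by rwa [Ideal.colon_span] at hcolon) hsup

theorem forall_of_isOka_of_forall_isPrime [IsNoetherianRing R] {P : Ideal R → Prop}
    (hP : Ideal.IsOka P) (h : ∀ p : Ideal R, p.IsPrime → (∀ J > p, P J) → P p) (J : Ideal R) :
    P J := by
  induction J using (wellFounded_gt (α := Ideal R)).induction with
  | _ J ih =>
  by_contra hJ
  exact hJ (h J (hP.isPrime_of_maximal_not (maximal_iff_forall_gt.2
    ⟨hJ, fun K hK => not_not_intro (ih K hK)⟩)) ih)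

end Ideals

section RegularUpTo

variable {R : Type u} [CommRing R]

/-- `IsRegularUpTo S rs` says that `rs` is weakly regular up to denominators in `S`: whenever
`x * y` lies in the ideal generated by the entries before `x`, so does `s * y`, for some `s ∈ S`
that is independent of `y`. Over a noetherian ring this means that `rs` becomes weakly regular over
the localization at `S`. Lists grow at the end, unlike in `RingTheory.Sequence.IsWeaklyRegular`. -/
inductive IsRegularUpTo (S : Submonoid R) : List R → Prop
  | nil : IsRegularUpTo S []
  | append_singleton {rs : List R} {x s : R} : IsRegularUpTo S rs → s ∈ S →
      (∀ y, x * y ∈ Ideal.ofList rs → s * y ∈ Ideal.ofList rs) → IsRegularUpTo S (rs ++ [x])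

theorem hasShortExact_ker_factor_colon {I : Ideal R} {x s : R} (hs : ∀ y, x * y ∈ I → s * y ∈ I) :
    ∃ K : ModuleCat.{u} R, HasShortExact K (ModuleCat.of R (R ⧸ I))
      (ModuleCat.of R (R ⧸ I.colon {x})) ∧ s • 𝟙 K = 0 := by
  have hle : I ≤ I.colon {x} := fun y hy =>
    Submodule.mem_colon_singleton.2 (I.mul_mem_right _ hy)
  refine ⟨ModuleCat.of R (LinearMap.ker (Submodule.factor hle)), hasShortExact_moduleCat_iff.2
    ⟨Submodule.subtype _, Submodule.factor hle, Submodule.subtype_injective _,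
      LinearMap.exact_subtype_ker_map _, Submodule.factor_surjective hle⟩, ?_⟩
  refine ModuleCat.hom_ext (LinearMap.ext fun ⟨z, hz⟩ => ?_)
  obtain ⟨y, rfl⟩ := Submodule.mkQ_surjective I z
  have hy : y ∈ I.colon {x} := (Submodule.Quotient.mk_eq_zero _).1 hz
  rw [Submodule.mem_colon_singleton, smul_eq_mul, mul_comm] at hy
  exact Subtype.ext (a1 := ⟨_, _⟩) ((Submodule.Quotient.mk_eq_zero I).2 (hs y hy))

theorem mul_mem_annihilator_ext_quotient_sup {I : Ideal R} {x s a : R} {t : ℕ}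
    (hs : ∀ y, x * y ∈ I → s * y ∈ I)
    (ha : ∀ (N : ModuleCat.{u} R) (n : ℕ), t < n →
      a ∈ Module.annihilator R (Ext (ModuleCat.of R (R ⧸ I)) N n))
    (N : ModuleCat.{u} R) {n : ℕ} (hn : t + 1 < n) :
    s * a * a ∈ Module.annihilator R (Ext (ModuleCat.of R (R ⧸ (I ⊔ Ideal.span {x}))) N n) := by
  obtain ⟨n, rfl⟩ := Nat.exists_eq_add_of_le' (show 2 ≤ n by omega)
  obtain ⟨K, hK, hsK⟩ := hasShortExact_ker_factor_colon hs
  exact (hasShortExact_colon I x).mul_mem_annihilator_ext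
    (hK.mul_mem_annihilator_ext (mem_annihilator_ext_of_smul_id_eq_zero hsK N n)
      (ha N (n + 1) (by omega)))
    (ha N (n + 2) (by omega))

namespace IsRegularUpTo

variable {S : Submonoid R} {rs : List R}

theorem exists_mem_annihilator_ext (h : IsRegularUpTo S rs) :
    ∃ s ∈ S, ∀ (N : ModuleCat.{u} R) (n : ℕ), rs.length < n →
      s ∈ Module.annihilator R (Ext (ModuleCat.of R (R ⧸ Ideal.ofList rs)) N n) := by
  induction h with
  | nil =>
    refine ⟨1, S.one_mem, fun N n hn => ?_⟩
    obtain ⟨n, rfl⟩ := Nat.exists_eq_add_of_le' hn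
    have : Module.Projective R (R ⧸ Ideal.ofList ([] : List R)) := by
      rw [Ideal.ofList_nil]
      exact Module.Projective.of_equiv (Submodule.quotEquivOfEqBot (⊥ : Ideal R) rfl).symm
    have := (IsProjective.iff_projective _).1 this
    exact Module.mem_annihilator.2 fun e => by rw [one_smul]; exact e.eq_zero_of_projective
  | @append_singleton rs x s _ hs hx ih =>
    obtain ⟨a, ha, hann⟩ := ih
    refine ⟨s * a * a, S.mul_mem (S.mul_mem hs ha) ha, fun N n hn => ?_⟩
    rw [Ideal.ofList_append, Ideal.ofList_singleton]
    exact mul_mem_annihilator_ext_quotient_sup hx hann N (by simpa using hn)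

theorem isWeaklyRegular (h : IsRegularUpTo S rs) (hS : S ≤ IsUnit.submonoid R) :
    RingTheory.Sequence.IsWeaklyRegular R rs := by
  induction h with
  | nil => exact .nil R R
  | @append_singleton rs x s _ hs hx ih =>
    refine (RingTheory.Sequence.isWeaklyRegular_append_iff _ _ _).2
      ⟨ih, (RingTheory.Sequence.isWeaklyRegular_singleton_iff _ _).2 ?_⟩
    rw [smul_eq_mul, Ideal.mul_top, isSMulRegular_quotient_iff_mem_of_smul_mem]
    exact fun y hy => (Ideal.unit_mul_mem_iff_mem _ (hS hs)).1 (hx y hy)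

end IsRegularUpTo

end RegularUpTo

section PrimeAvoidance

variable {R : Type u} [CommRing R] [IsNoetherianRing R] {p : Ideal R}

theorem exists_mem_forall_isAssociatedPrime_notMem {M : Type*} [AddCommGroup M] [Module R M]
    [Module.Finite R M] (hp : ¬ IsAssociatedPrime p M) :
    ∃ x ∈ p, ∀ q ≤ p, IsAssociatedPrime q M → x ∉ q := by
  have hfin : {q | q ∈ associatedPrimes R M ∧ q ≤ p}.Finite :=
    (associatedPrimes.finite R M).subset fun q hq => hq.1
  have hunion : ¬ ((p : Set R) ⊆ ⋃ q ∈ (hfin.toFinset : Set (Ideal R)), (q : Set R)) := by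
    rw [Ideal.subset_union_prime (f := fun q : Ideal R => q) ⊥ ⊥
      fun q hq _ _ => (hfin.mem_toFinset.1 hq).1.isPrime]
    rintro ⟨q, hq, hpq⟩
    obtain ⟨hqM, hqp⟩ := hfin.mem_toFinset.1 hq
    exact hp (hqp.antisymm hpq ▸ hqM)
  obtain ⟨x, hxp, hx⟩ := Set.not_subset.1 hunion
  exact ⟨x, hxp, fun q hqp hqM hxq =>
    hx (Set.mem_biUnion (hfin.mem_toFinset.2 ⟨hqM, hqp⟩) hxq)⟩

theorem exists_notMem_forall_smul_eq_zero [p.IsPrime] {M : Type*} [AddCommGroup M] [Module R M]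
    [Module.Finite R M] {x : R} (hx : ∀ q ≤ p, IsAssociatedPrime q M → x ∉ q) :
    ∃ s ∉ p, ∀ m : M, x • m = 0 → s • m = 0 := by
  let K := LinearMap.ker (LinearMap.lsmul R M x)
  suffices hK : ¬ Module.annihilator R K ≤ p by
    obtain ⟨s, hs, hsp⟩ := Set.not_subset.1 hK
    exact ⟨s, hsp, fun m hm => congrArg Subtype.val (Module.mem_annihilator.1 hs (⟨m, hm⟩ : K))⟩
  intro hK
  obtain ⟨q, hq, hqp⟩ := Ideal.exists_minimalPrimes_le hK
  have hqK : IsAssociatedPrime q K :=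
    Module.associatedPrimes.minimalPrimes_annihilator_subset_associatedPrimes R K hq
  exact hx q hqp (hqK.map_of_injective K.subtype K.subtype_injective)
    (hq.1.2 (Module.mem_annihilator.2 fun m => Subtype.ext m.2))

theorem exists_isRegularUpTo_isAssociatedPrime (p : Ideal R) [p.IsPrime] :
    ∃ rs : List R, (∀ r ∈ rs, r ∈ p) ∧ IsRegularUpTo p.primeCompl rs ∧
      IsAssociatedPrime p (R ⧸ Ideal.ofList rs) := by
  suffices extend : ∀ (I : Ideal R) (rs : List R), Ideal.ofList rs = I → (∀ r ∈ rs, r ∈ p) →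
      IsRegularUpTo p.primeCompl rs → ∃ rs : List R, (∀ r ∈ rs, r ∈ p) ∧
        IsRegularUpTo p.primeCompl rs ∧ IsAssociatedPrime p (R ⧸ Ideal.ofList rs) from
    extend _ [] rfl (by simp) .nil
  intro I
  induction I using (wellFounded_gt (α := Ideal R)).induction with
  | _ I ih =>
  rintro rs rfl hrs hreg
  by_cases hass : IsAssociatedPrime p (R ⧸ Ideal.ofList rs)
  · exact ⟨rs, hrs, hreg, hass⟩
  obtain ⟨x, hxp, hx⟩ := exists_mem_forall_isAssociatedPrime_notMem hass
  obtain ⟨s, hsp, hs⟩ := exists_notMem_forall_smul_eq_zero hx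
  have hs' (y) (hy : x * y ∈ Ideal.ofList rs) : s * y ∈ Ideal.ofList rs :=
    (Submodule.Quotient.mk_eq_zero _).1
      (hs (Submodule.Quotient.mk y) ((Submodule.Quotient.mk_eq_zero _).2 hy))
  have hle : Ideal.ofList rs ≤ p := Ideal.span_le.2 hrs
  have hxI : x ∉ Ideal.ofList rs := fun hxI =>
    hsp (hle (by simpa using hs' 1 (by simpa using hxI)))
  refine ih _ ?_ (rs ++ [x]) rfl ?_ (hreg.append_singleton hsp hs')
  · rw [Ideal.ofList_append, Ideal.ofList_singleton]
    exact Submodule.lt_sup_iff_notMem.2 hxI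
  · simpa [or_imp, forall_and] using ⟨hrs, hxp⟩

end PrimeAvoidance

theorem subsingleton_of_surjective_smul {R E : Type*} [CommRing R] [IsLocalRing R] [AddCommGroup E]
    [Module R E] [Module.Finite R E] {x : R} (hx : x ∈ IsLocalRing.maximalIdeal R)
    (hE : Function.Surjective fun e : E => x • e) : Subsingleton E := by
  by_contra hsub
  have := not_subsingleton_iff_nontrivial.1 hsub
  refine Submodule.top_ne_pointwise_smul_of_mem_jacobson_annihilator (M := E)
    (IsLocalRing.maximalIdeal_le_jacobson _ hx) (eq_top_iff.2 fun e _ => ?_).symm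
  obtain ⟨e', rfl⟩ := hE e
  exact Submodule.smul_mem_pointwise_smul _ _ _ trivial

section Prime

open scoped Pointwise

variable {R : Type u} [CommRing R] {p : Ideal R} {N : ModuleCat.{u} R} {x : R} {n : ℕ}

theorem isSMulRegular_quotient_of_notMem [hp : p.IsPrime] (hx : x ∉ p) : IsSMulRegular (R ⧸ p) x :=
  (isSMulRegular_quotient_iff_mem_of_smul_mem p x).2 fun _ hy => (hp.mem_or_mem hy).resolve_left hx

theorem subsingleton_ext_quotSMulTop_quotient (hx : x ∉ p)
    (h : ∀ J > p, Subsingleton (Ext (ModuleCat.of R (R ⧸ J)) N n)) :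
    Subsingleton (Ext (ModuleCat.of R (QuotSMulTop x (R ⧸ p))) N n) := by
  have hmap : x • (⊤ : Submodule R (R ⧸ p)) = Submodule.map p.mkQ (Ideal.span {x}) := by
    rw [← Submodule.ideal_span_singleton_smul, ← p.range_mkQ, LinearMap.range_eq_map,
      ← Submodule.map_smul'', smul_eq_mul, Ideal.mul_top]
  let e := (Submodule.quotEquivOfEq _ _ hmap).trans
    (Submodule.quotientQuotientEquivQuotientSup p (Ideal.span {x}))
  exact subsingleton_ext_of_iso e.toModuleIso (h _ (Submodule.lt_sup_iff_notMem.2 hx))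

theorem isSMulRegular_ext_quotient [p.IsPrime] (hx : x ∉ p)
    (h : ∀ J > p, Subsingleton (Ext (ModuleCat.of R (R ⧸ J)) N n)) :
    IsSMulRegular (Ext (ModuleCat.of R (R ⧸ p)) N n) x :=
  isSMulRegular_ext_of_shortExact
    (isSMulRegular_quotient_of_notMem (p := p) hx).smulShortComplex_shortExact
    (subsingleton_ext_quotSMulTop_quotient hx h)

end Prime

section SurjectivePrecomp

variable {𝒞 : Type u} [Category.{w} 𝒞] [Abelian 𝒞] [HasExt.{w} 𝒞]

theorem surjective_mk₀_comp_ext {X Y N : 𝒞} (f : X ⟶ Y) [Mono f] (n : ℕ)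
    [HasInjectiveDimensionLE N n] :
    Function.Surjective fun e : Ext Y N n => (Ext.mk₀ f).comp e (zero_add n) := fun e => by
  have hS : (ShortComplex.mk f (cokernel.π f) (cokernel.condition f)).ShortExact :=
    { exact := ShortComplex.exact_cokernel f }
  exact Ext.contravariant_sequence_exact₁ hS N e (add_comm 1 n)
    (Ext.eq_zero_of_hasInjectiveDimensionLT _ (n + 1) le_rfl)

end SurjectivePrecomp

theorem finite_of_surjective_of_ker_le {R A B C : Type*} [CommRing R] [IsNoetherianRing R]
    [AddCommGroup A] [Module R A] [AddCommGroup B] [Module R B] [AddCommGroup C] [Module R C]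
    [Module.Finite R C] {f : A →ₗ[R] B} {g : A →ₗ[R] C} (hf : Function.Surjective f)
    (hgf : LinearMap.ker g ≤ LinearMap.ker f) : Module.Finite R B := by
  have : Module.Finite R (A ⧸ LinearMap.ker g) :=
    Module.Finite.equiv g.quotKerEquivRange.symm
  exact Module.Finite.of_surjective ((LinearMap.ker g).liftQ f hgf)
    (LinearMap.range_eq_top.1 ((Submodule.range_liftQ _ _ _).trans (LinearMap.range_eq_top.2 hf)))

section VanishingAbovePrime

variable {R : Type u} [CommRing R] {p : Ideal R} [hp : p.IsPrime] {T B H M : ModuleCat.{u} R}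
  {s : R} {n : ℕ}

theorem subsingleton_ext_quotient_of_mem_annihilator [HasInjectiveDimensionLE H n]
    (hV : ∀ J > p, Subsingleton (Ext (ModuleCat.of R (R ⧸ J)) H n))
    (f : ModuleCat.of R (R ⧸ p) ⟶ T) [Mono f] (hsp : s ∉ p)
    (hs : s ∈ Module.annihilator R (Ext T H n)) :
    Subsingleton (Ext (ModuleCat.of R (R ⧸ p)) H n) := by
  refine subsingleton_of_forall_eq 0 fun e => ?_
  obtain ⟨e, rfl⟩ := surjective_mk₀_comp_ext f n e
  refine (isSMulRegular_ext_quotient hsp hV).right_eq_zero_of_smul ?_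
  rw [← Ext.comp_smul, Module.mem_annihilator.1 hs e, Ext.comp_zero]

theorem finite_ext_quotient_of_mem_annihilator [IsNoetherianRing R] [HasInjectiveDimensionLE H n]
    (hV : ∀ J > p, Subsingleton (Ext (ModuleCat.of R (R ⧸ J)) H n))
    (f : ModuleCat.of R (R ⧸ p) ⟶ T) [Mono f] (hsp : s ∉ p) (h : HasShortExact B H M)
    (hs : s ∈ Module.annihilator R (Ext T B n)) [Module.Finite R T] [Module.Finite R M] :
    Module.Finite R (Ext (ModuleCat.of R (R ⧸ p)) H n) := by
  obtain ⟨i, q, w, hS⟩ := h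
  refine finite_of_surjective_of_ker_le
    (f := (Ext.mk₀ f).precompOfLinear R H (zero_add n))
    (g := (Ext.mk₀ q).postcompOfLinear R T (add_zero n))
    (surjective_mk₀_comp_ext f n) fun e he => ?_
  obtain ⟨b, rfl⟩ := Ext.covariant_sequence_exact₂ T hS e he
  have hb : s • (Ext.mk₀ f).comp (b.comp (Ext.mk₀ i) (add_zero n)) (zero_add n) = 0 := by
    rw [← Ext.comp_smul, ← Ext.smul_comp, Module.mem_annihilator.1 hs b, Ext.zero_comp,
      Ext.comp_zero]
  exact (isSMulRegular_ext_quotient hsp hV).right_eq_zero_of_smul hb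

theorem subsingleton_ext_quotient_of_finite [IsLocalRing R] [HasInjectiveDimensionLE H n]
    (hpm : p ≠ IsLocalRing.maximalIdeal R)
    [Module.Finite R (Ext (ModuleCat.of R (R ⧸ p)) H n)] :
    Subsingleton (Ext (ModuleCat.of R (R ⧸ p)) H n) := by
  obtain ⟨x, hxm, hxp⟩ :=
    SetLike.exists_of_lt ((IsLocalRing.le_maximalIdeal hp.ne_top).lt_of_ne hpm)
  exact subsingleton_of_surjective_smul hxm (surjective_smul_ext_of_shortExact
    (isSMulRegular_quotient_of_notMem hxp).smulShortComplex_shortExact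
    (subsingleton_of_forall_eq 0 fun e => e.eq_zero_of_hasInjectiveDimensionLT (n + 1) le_rfl))

end VanishingAbovePrime

theorem IsRegularUpTo.isRegular {R : Type*} [CommRing R] [IsLocalRing R] {rs : List R}
    (h : IsRegularUpTo (IsLocalRing.maximalIdeal R).primeCompl rs)
    (hrs : ∀ r ∈ rs, r ∈ IsLocalRing.maximalIdeal R) : RingTheory.Sequence.IsRegular R rs :=
  .of_isWeaklyRegular_of_mem_maximalIdeal R hrs
    (h.isWeaklyRegular fun _ hs => not_not.1 hs)

theorem subsingleton_ext_quotient_of_forall_isRegular {R : Type u} [CommRing R]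
    [IsNoetherianRing R] [IsLocalRing R] {n : ℕ} {B H M : ModuleCat.{u} R}
    (hB : GorensteinInjective B) (h : HasShortExact B H M) [Module.Finite R M]
    [HasInjectiveDimensionLE H (n + 1)]
    (hreg : ∀ rs : List R, (∀ r ∈ rs, r ∈ IsLocalRing.maximalIdeal R) →
      RingTheory.Sequence.IsRegular R rs → rs.length < n + 1) (J : Ideal R) :
    Subsingleton (Ext (ModuleCat.of R (R ⧸ J)) H (n + 1)) := by
  refine forall_of_isOka_of_forall_isPrime (isOka_subsingleton_ext_quotient H (n + 1))
    (fun p hp hV => ?_) J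
  obtain ⟨rs, hrs, hreg_p, hass⟩ := exists_isRegularUpTo_isAssociatedPrime p
  obtain ⟨s, hsp, hs⟩ := hreg_p.exists_mem_annihilator_ext
  obtain ⟨_, f, hf⟩ := (isAssociatedPrime_iff_exists_injective_linearMap _ _).1 hass
  have : Mono (ModuleCat.ofHom f) := (ModuleCat.mono_iff_injective _).2 hf
  by_cases hpm : p = IsLocalRing.maximalIdeal R
  · subst hpm
    have hlt := hreg rs hrs (hreg_p.isRegular hrs)
    exact subsingleton_ext_quotient_of_mem_annihilator hV (ModuleCat.ofHom f) hsp (hs H _ hlt)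
  · have : Module.Finite R (ModuleCat.of R (R ⧸ Ideal.ofList rs)) :=
      inferInstanceAs (Module.Finite R (R ⧸ Ideal.ofList rs))
    have := finite_ext_quotient_of_mem_annihilator hV (ModuleCat.ofHom f) hsp h
      (hB.mem_annihilator_ext hs n)
    exact subsingleton_ext_quotient_of_finite hpm

section LowerBound

theorem HasGorensteinInjectiveDimensionLE.subsingleton_ext {R : Type u} [CommRing R]
    {M T : ModuleCat.{u} R} {n j t : ℕ} (h : HasGorensteinInjectiveDimensionLE M n)
    [HasProjectiveDimensionLT T t] (hj : n < j) : Subsingleton (Ext T M j) := by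
  obtain ⟨B, H, hB, hH, hBHM⟩ := h
  refine hBHM.subsingleton_ext_right
    (subsingleton_of_forall_eq 0 fun e => e.eq_zero_of_hasInjectiveDimensionLT (n + 1) hj) ?_
  have hT : ∀ (N : ModuleCat.{u} R) (i : ℕ), t < i → (1 : R) ∈ Module.annihilator R (Ext T N i) :=
    fun N i hi => Module.mem_annihilator.2 fun e => by
      rw [one_smul]
      exact e.eq_zero_of_hasProjectiveDimensionLT t hi.le
  exact Module.annihilator_eq_top_iff.1
    ((Ideal.eq_top_iff_one _).2 (hB.mem_annihilator_ext hT j))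

theorem nontrivial_ext_self_zero {R : Type u} [CommRing R] (M : ModuleCat.{u} R)
    [Nontrivial M] : Nontrivial (Ext (ModuleCat.of R R) M 0) := by
  obtain ⟨m, hm⟩ := exists_ne (0 : M)
  refine nontrivial_of_ne (Ext.mk₀ (ModuleCat.ofHom (LinearMap.toSpanSingleton R M m))) 0
    fun h => hm ?_
  rw [← LinearMap.toSpanSingleton_apply_one R M m]
  exact congr($((Ext.mk₀_eq_zero_iff _).1 h) (1 : R))

open scoped Pointwise

variable {R : Type u} [CommRing R] [IsNoetherianRing R] [IsLocalRing R]

theorem nontrivial_ext_quotient_ofList_smul_top {M : ModuleCat.{u} R} [Module.Finite R M]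
    {rs : List R} (hrs : ∀ r ∈ rs, r ∈ IsLocalRing.maximalIdeal R) (T : Type u) [AddCommGroup T]
    [Module R T] [Module.Finite R T] (hreg : RingTheory.Sequence.IsWeaklyRegular T rs) {i : ℕ}
    (hT : Nontrivial (Ext (ModuleCat.of R T) M i)) :
    Nontrivial (Ext (ModuleCat.of R (T ⧸ Ideal.ofList rs • (⊤ : Submodule R T))) M
      (i + rs.length)) := by
  induction rs generalizing T i with
  | nil =>
    refine not_subsingleton_iff_nontrivial.1 fun h => not_subsingleton_iff_nontrivial.2 hT ?_
    refine subsingleton_ext_of_iso (LinearEquiv.toModuleIso ?_) h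
    exact (Submodule.quotEquivOfEqBot _ (by rw [Ideal.ofList_nil, Submodule.bot_smul])).symm
  | cons x rs ih =>
    obtain ⟨hx, hreg⟩ := (RingTheory.Sequence.isWeaklyRegular_cons_iff _ _ _).1 hreg
    have hQ : Nontrivial (Ext (ModuleCat.of R (QuotSMulTop x T)) M (i + 1)) := by
      refine not_subsingleton_iff_nontrivial.1 fun h => not_subsingleton_iff_nontrivial.2 hT ?_
      have : Module.Finite R (ModuleCat.of R T) := inferInstanceAs (Module.Finite R T)
      exact subsingleton_of_surjective_smul (hrs x List.mem_cons_self)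
        (surjective_smul_ext_of_shortExact hx.smulShortComplex_shortExact h)
    have hind := ih (fun r hr => hrs r (List.mem_cons_of_mem x hr)) (QuotSMulTop x T) hreg hQ
    rw [List.length_cons, add_comm rs.length, ← add_assoc]
    refine not_subsingleton_iff_nontrivial.1 fun h => not_subsingleton_iff_nontrivial.2 hind ?_
    refine subsingleton_ext_of_iso (LinearEquiv.toModuleIso ?_) h
    exact (Submodule.quotOfListConsSMulTopEquivQuotSMulTopInner T x rs).symm

theorem hasProjectiveDimensionLT_quotient_ofList_smul_top {rs : List R}
    (hrs : ∀ r ∈ rs, r ∈ IsLocalRing.maximalIdeal R)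
    (hreg : RingTheory.Sequence.IsWeaklyRegular R rs) :
    HasProjectiveDimensionLT (ModuleCat.of R (R ⧸ Ideal.ofList rs • (⊤ : Submodule R R)))
      (rs.length + 1) := by
  have : Nontrivial (ModuleCat.of R R) := inferInstanceAs (Nontrivial R)
  have : Module.Finite R (ModuleCat.of R R) := inferInstanceAs (Module.Finite R R)
  refine (projectiveDimension_le_iff _ _).1 ?_
  rw [ModuleCat.projectiveDimension_quotient_eq_add_length_of_isWeaklyRegular (.of R R) rs hreg hrs,
    ModuleCat.projectiveDimension_eq_zero_of_projective, zero_add]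

theorem HasGorensteinInjectiveDimensionLE.length_le {n : ℕ} {M : ModuleCat.{u} R}
    [Module.Finite R M] [Nontrivial M] (h : HasGorensteinInjectiveDimensionLE M n) {rs : List R}
    (hrs : ∀ r ∈ rs, r ∈ IsLocalRing.maximalIdeal R)
    (hreg : RingTheory.Sequence.IsWeaklyRegular R rs) : rs.length ≤ n := by
  by_contra! hlt
  have := hasProjectiveDimensionLT_quotient_ofList_smul_top hrs hreg
  have hne := nontrivial_ext_quotient_ofList_smul_top hrs R hreg (nontrivial_ext_self_zero M)
  rw [zero_add] at hne
  exact not_subsingleton_iff_nontrivial.2 hne (h.subsingleton_ext (t := rs.length + 1) hlt)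

end LowerBound

theorem HasGorensteinInjectiveDimensionLE.of_forall_isRegular {R : Type u} [CommRing R]
    [IsNoetherianRing R] [IsLocalRing R] {M : ModuleCat.{u} R} [Module.Finite R M] {n : ℕ}
    (h : HasGorensteinInjectiveDimensionLE M (n + 1))
    (hreg : ∀ rs : List R, (∀ r ∈ rs, r ∈ IsLocalRing.maximalIdeal R) →
      RingTheory.Sequence.IsRegular R rs → rs.length < n + 1) :
    HasGorensteinInjectiveDimensionLE M n :=
  let ⟨B, H, hB, _, hBHM⟩ := h
  ⟨B, H, hB, hasInjectiveDimensionLE_of_subsingleton_ext_quotient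
    (subsingleton_ext_quotient_of_forall_isRegular hB hBHM hreg), hBHM⟩

theorem gid_eq_depth_of_finite_gid
    (R : Type u) [CommRing R] [IsNoetherianRing R] [IsLocalRing R]
    (M : Type u) [AddCommGroup M] [Module R M] [Module.Finite R M] [Nontrivial M]
    (hfin : gid R M < ⊤) :
    gid R M = ringDepth R := by
  have : Module.Finite R (ModuleCat.of R M) := inferInstanceAs (Module.Finite R M)
  have : Nontrivial (ModuleCat.of R M) := inferInstanceAs (Nontrivial M)
  obtain ⟨n, hn⟩ := ENat.ne_top_iff_exists.1 hfin.ne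
  have hM : HasGorensteinInjectiveDimensionLE (ModuleCat.of R M) n := gid_le_natCast_iff.1 hn.ge
  refine le_antisymm (not_lt.1 fun hlt => ?_) (sSup_le ?_)
  · rw [← hn] at hlt
    obtain _ | k := n
    · exact not_lt_zero hlt
    have hM' := hM.of_forall_isRegular fun rs hrs hreg =>
      Nat.cast_lt.1 ((show (rs.length : ℕ∞) ≤ ringDepth R from
        le_sSup ⟨rs, rfl, hrs, hreg⟩).trans_lt hlt)
    exact absurd (gid_le_natCast_iff.2 hM') (by rw [← hn, Nat.cast_le]; omega)
  · rintro _ ⟨rs, rfl, hrs, hreg⟩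
    exact hn ▸ Nat.cast_le.2 (hM.length_le hrs hreg.toIsWeaklyRegular)
end

section
/- Let R be a commutative noetherian ring, let J be a Gorenstein injective R-module, let p be a prime ideal of R, and let T be an R_p-module of finite projective dimension. Then Ext^i_{R_p}(T, J_p) = 0 for all i > 0. -/
/-!
Let `R` be a commutative noetherian ring, `J` a Gorenstein injective `R`-module, `p` a
prime ideal, and `T` an `R_p`-module of finite projective dimension. Then
`Ext^i_{R_p}(T, J_p) = 0` for all `i > 0`.
-/

universe u

open CategoryTheory

/-- A witness for an exact sequence `0 → Pₙ → ⋯ → P₁ → P₀ → T → 0` with each `Pᵢ`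
a projective `A`-module (modules beyond index `n` are trivial). -/
structure FinProjResWitness (A : Type u) [CommRing A]
    (T : Type u) [AddCommGroup T] [Module A T] (n : ℕ) : Type (u + 1) where
  P : ℕ → Type u
  [acg : ∀ i, AddCommGroup (P i)]
  [mod : ∀ i, Module A (P i)]
  proj : ∀ i ≤ n, Module.Projective A (P i)
  triv : ∀ i, n < i → Subsingleton (P i)
  π : P 0 →ₗ[A] T
  π_surj : Function.Surjective π
  d : ∀ i : ℕ, P (i + 1) →ₗ[A] P i
  exact_zero : LinearMap.ker π = LinearMap.range (d 0)
  exact : ∀ i : ℕ, LinearMap.ker (d i) = LinearMap.range (d (i + 1))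

attribute [local instance] HasDerivedCategory.standard
attribute [local instance] CategoryTheory.hasExt_of_hasDerivedCategory

set_option synthInstance.maxHeartbeats 1000000
set_option maxHeartbeats 1000000

/-!
A Gorenstein injective module is an `n`-th cosyzygy for every `n`, and over a noetherian ring
localization is exact and preserves injectives, so `J_p` is again an `n`-th cosyzygy, say of `K`.
Dimension shifting along the injectives in between identifies `Ext^i(T, J_p)` with
`Ext^(i + n)(T, K)` for `i > 0`, and this group is zero as soon as `n` is at least the projective
dimension of `T`.
-/

universe w v₁ v₂ u₁ u₂

section Cosyzygy

variable {C : Type u₁} [Category.{v₁} C] [Abelian C] {D : Type u₂} [Category.{v₂} D] [Abelian D]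

/-- `IsCosyzygy n X` says that `X` is an `n`-th cosyzygy: there is an exact sequence
`0 → K → Iₙ → ⋯ → I₁ → X → 0` with all `Iₖ` injective. The sequence is encoded as a chain of `n`
short exact sequences, so that dimension shifting becomes an induction. -/
inductive IsCosyzygy : ℕ → C → Prop
  | zero (X : C) : IsCosyzygy 0 X
  | succ {n : ℕ} {S : ShortComplex C} (hS : S.ShortExact) (hI : Injective S.X₂)
      (hK : IsCosyzygy n S.X₁) : IsCosyzygy (n + 1) S.X₃

namespace IsCosyzygy

lemma of_iso {n : ℕ} {X Y : C} (hX : IsCosyzygy n X) (e : X ≅ Y) : IsCosyzygy n Y := by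
  cases hX with
  | zero => exact zero Y
  | @succ n S hS hI hK =>
    let S' : ShortComplex C := .mk S.f (S.g ≫ e.hom) (by rw [S.zero_assoc, Limits.zero_comp])
    let φ : S ≅ S' := ShortComplex.isoMk (Iso.refl _) (Iso.refl _) e
    have hS' : S'.ShortExact := ShortComplex.shortExact_of_iso φ hS
    exact succ hS' hI hK

lemma map {n : ℕ} {X : C} (hX : IsCosyzygy n X) (F : C ⥤ D) [F.PreservesZeroMorphisms]
    [Limits.PreservesFiniteLimits F] [Limits.PreservesFiniteColimits F]
    [F.PreservesInjectiveObjects] : IsCosyzygy n (F.obj X) := by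
  induction hX with
  | zero X => exact zero (F.obj X)
  | succ hS hI _ ih => exact succ (hS.map_of_exact F) (F.injective_obj_of_injective hI) ih

lemma subsingleton_ext [HasExt.{w} C] {n : ℕ} {X : C} (hX : IsCosyzygy n X) (T : C) {i : ℕ}
    (hi : 0 < i) (hT : HasProjectiveDimensionLT T (n + i)) :
    Subsingleton (Abelian.Ext T X i) := by
  induction hX generalizing i with
  | zero X => exact HasProjectiveDimensionLT.subsingleton T (0 + i) i (by lia) X
  | @succ n S hS hI _ ih =>
    have hK : Subsingleton (Abelian.Ext T S.X₁ (i + 1)) :=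
      ih i.succ_pos (by rwa [← add_assoc, add_right_comm])
    have hExtI : Subsingleton (Abelian.Ext T S.X₂ i) := by
      obtain ⟨j, rfl⟩ := Nat.exists_eq_succ_of_ne_zero hi.ne'
      exact Abelian.Ext.subsingleton_of_injective T S.X₂ j
    refine subsingleton_of_forall_eq 0 fun x ↦ ?_
    obtain ⟨y, rfl⟩ := Abelian.Ext.covariant_sequence_exact₃ T hS x rfl (Subsingleton.elim _ 0)
    rw [Subsingleton.elim y 0, Abelian.Ext.zero_comp]

end IsCosyzygy

end Cosyzygy

lemma IsCosyzygy.localizedModule {R : Type u} [CommRing R] [IsNoetherianRing R]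
    {M : Type u} [AddCommGroup M] [Module R M] {n : ℕ} (hM : IsCosyzygy n (ModuleCat.of R M))
    (S : Submonoid R) :
    IsCosyzygy n (ModuleCat.of (Localization S) (LocalizedModule S M)) :=
  (hM.map (ModuleCat.localizedModuleFunctor S)).of_iso
    (Shrink.linearEquiv (Localization S) (LocalizedModule S M)).toModuleIso

lemma GorensteinInjectiveWitness.isCosyzygy_ker {R : Type u} [CommRing R]
    {J : Type u} [AddCommGroup J] [Module R J] (w : GorensteinInjectiveWitness R J) (n : ℕ)
    (i : ℤ) :
    letI := w.acg
    letI := w.mod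
    IsCosyzygy n (ModuleCat.of R (LinearMap.ker (w.d i))) := by
  let := w.acg
  let := w.mod
  induction n generalizing i with
  | zero => exact .zero _
  | succ n ih =>
    have hS := LinearMap.shortExact_shortComplexKer (w.d (i + 1)).surjective_rangeRestrict
    have := w.inj (i + 1 + 1)
    rw [w.exact i]
    refine .succ hS (Module.injective_object_of_injective_module R (w.I (i + 1 + 1))) ?_
    dsimp only [LinearMap.shortComplexKer]
    rw [LinearMap.ker_rangeRestrict]
    exact ih (i + 1)

lemma IsGorensteinInjective.isCosyzygy {R : Type u} [CommRing R]
    {J : Type u} [AddCommGroup J] [Module R J] (hJ : IsGorensteinInjective R J) (n : ℕ) :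
    IsCosyzygy n (ModuleCat.of R J) := by
  obtain ⟨w⟩ := hJ
  let := w.acg
  let := w.mod
  obtain ⟨e⟩ := w.ker_iso
  exact (w.isCosyzygy_ker n (-1)).of_iso e.symm.toModuleIso

namespace FinProjResWitness

variable {A : Type u} [CommRing A] {T : Type u} [AddCommGroup T] [Module A T] {n : ℕ}

lemma projective_P (w : FinProjResWitness A T n) (i : ℕ) :
    letI := w.acg
    letI := w.mod
    Projective (ModuleCat.of A (w.P i)) := by
  let := w.acg
  let := w.mod
  rw [← IsProjective.iff_projective]
  rcases le_or_gt i n with hi | hi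
  · exact w.proj i hi
  · have := w.triv i hi
    infer_instance

lemma hasProjectiveDimensionLT_range (w : FinProjResWitness A T n) {m k : ℕ} (h : n ≤ k + m) :
    letI := w.acg
    letI := w.mod
    HasProjectiveDimensionLT (ModuleCat.of A (LinearMap.range (w.d k))) m := by
  let := w.acg
  let := w.mod
  induction m generalizing k with
  | zero =>
    have := w.triv (k + 1) (by lia)
    have : Subsingleton (LinearMap.range (w.d k)) :=
      (w.d k).surjective_rangeRestrict.subsingleton
    exact (ModuleCat.isZero_of_subsingleton _).hasProjectiveDimensionLT_zero
  | succ m ih =>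
    have hS := LinearMap.shortExact_shortComplexKer (w.d k).surjective_rangeRestrict
    have := w.projective_P (k + 1)
    refine hS.hasProjectiveDimensionLT_X₃ m ?_ (hasProjectiveDimensionLT_of_ge _ 1 _ (by lia))
    dsimp only [LinearMap.shortComplexKer]
    rw [LinearMap.ker_rangeRestrict, w.exact k]
    exact ih (by lia)

lemma hasProjectiveDimensionLE (w : FinProjResWitness A T n) :
    HasProjectiveDimensionLE (ModuleCat.of A T) n := by
  let := w.acg
  let := w.mod
  have := w.projective_P 0
  refine (LinearMap.shortExact_shortComplexKer w.π_surj).hasProjectiveDimensionLT_X₃ n ?_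
    (hasProjectiveDimensionLT_of_ge _ 1 _ (by lia))
  dsimp only [LinearMap.shortComplexKer]
  rw [w.exact_zero]
  exact w.hasProjectiveDimensionLT_range (by lia)

end FinProjResWitness

theorem ext_vanishing_of_finite_projdim_of_isGorensteinInjective_general
    (R : Type u) [CommRing R] [IsNoetherianRing R] (S : Submonoid R)
    [HasExt.{w} (ModuleCat.{u} (Localization S))]
    (J : Type u) [AddCommGroup J] [Module R J] (n : ℕ) (hJ : IsCosyzygy n (ModuleCat.of R J))
    (T : Type u) [AddCommGroup T] [Module (Localization S) T]
    [HasProjectiveDimensionLE (ModuleCat.of (Localization S) T) n] :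
    ∀ i : ℕ, 0 < i →
      Subsingleton (Abelian.Ext (ModuleCat.of (Localization S) T)
        (ModuleCat.of (Localization S) (LocalizedModule S J)) i) :=
  fun i hi ↦ (hJ.localizedModule S).subsingleton_ext _ hi
    (hasProjectiveDimensionLT_of_ge _ (n + 1) _ (by lia))

theorem ext_vanishing_of_finite_projdim_of_isGorensteinInjective
    (R : Type u) [CommRing R] [IsNoetherianRing R]
    (J : Type u) [AddCommGroup J] [Module R J] (hJ : IsGorensteinInjective R J)
    (p : Ideal R) [p.IsPrime]
    (T : Type u) [AddCommGroup T] [Module (Localization.AtPrime p) T]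
    (hT : ∃ n : ℕ, Nonempty (FinProjResWitness (Localization.AtPrime p) T n)) :
    ∀ i : ℕ, 0 < i →
      Subsingleton (Abelian.Ext (ModuleCat.of (Localization.AtPrime p) T)
        (ModuleCat.of (Localization.AtPrime p) (LocalizedModule p.primeCompl J)) i) := by
  obtain ⟨n, ⟨w⟩⟩ := hT
  have := w.hasProjectiveDimensionLE
  exact ext_vanishing_of_finite_projdim_of_isGorensteinInjective_general R p.primeCompl J n
    (hJ.isCosyzygy n) T
end
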